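/- Law of large numbers for the largest block: let L(π) denote the size of the largest block of a non-crossing partition π. Then L_n/log₂ n → 1 in probability as n → ∞; that is, for every ε > 0, the proportion (1/C_n)·#{π ∈ NC(n) : |L(π)/log₂ n − 1| > ε} tends to 0 as n → ∞ (here log₂ denotes the base-2 logarithm and n ≥ 2). -/

import Mathlib

/-- A finite partition of `Fin n` (representing `[n] = {1, …, n}`) is *non-crossing* if
there are no indices `a < b < c < d` with `a, c` in one block and `b, d` in a
different block. -/
def IsNonCrossing {n : ℕ} (P : Finpartition (Finset.univ : Finset (Fin n))) : Prop :=
  ∀ a b c d : Fin n, a < b → b < c → c < d →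
    ∀ B ∈ P.parts, ∀ B' ∈ P.parts,
      a ∈ B → c ∈ B → b ∈ B' → d ∈ B' → B = B'

/-- The type of non-crossing partitions of `[n]`. -/
def NCPart (n : ℕ) : Type :=
  {P : Finpartition (Finset.univ : Finset (Fin n)) // IsNonCrossing P}

noncomputable instance (n : ℕ) : Fintype (NCPart n) :=
  Fintype.ofInjective (fun P => P.1.parts)
    (fun _ _ h => Subtype.ext (Finpartition.ext h))

/-- The number of blocks of a non-crossing partition. -/
def numBlocks {n : ℕ} (P : NCPart n) : ℕ := P.1.parts.card

/-- The number of blocks of size `l` of a non-crossing partition. -/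
def numBlocksOfSize {n : ℕ} (l : ℕ) (P : NCPart n) : ℕ :=
  (P.1.parts.filter fun B => B.card = l).card

open Filter

/-- The size of the largest block of a non-crossing partition. -/
def maxBlockSize {n : ℕ} (P : NCPart n) : ℕ := P.1.parts.sup Finset.card

/-!
Recording the size of every block at its minimum turns a non-crossing partition of `[n]` into a
Łukasiewicz word of length `n + 1`. By the cycle lemma, the rotations of these words are the weak
compositions of `n` into `n + 1` parts, each obtained exactly once, so `L_n` is distributed as the
largest part of a uniformly random weak composition. A given part is at least `k` with probability
at most `2⁻ᵏ`, whence `P(L_n ≥ k) ≤ (n + 1) / 2ᵏ`; comparing the uniform distribution with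
independent geometric parts gives `P(L_n < k) ≤ 2 (2n + 1) (1 - 2⁻ᵏ)ⁿ⁺¹`. The first bound vanishes
for `k = (1 + ε) log₂ n`, the second for `k = (1 - ε) log₂ n`.
-/

open Finset

lemma sum_zmod_eq_sum_range {M : Type*} [AddCommMonoid M] {m : ℕ} [NeZero m] (x : ZMod m → M) :
    ∑ z, x z = ∑ j ∈ range m, x j := by
  refine (sum_nbij' (fun j : ℕ => (j : ZMod m)) ZMod.val ?_ ?_ ?_ ?_ ?_).symm <;>
    simp +contextual [ZMod.val_lt, Nat.mod_eq_of_lt]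

lemma sum_range_shift_eq {M : Type*} [AddCommMonoid M] {m : ℕ} [NeZero m] (x : ZMod m → M)
    (r : ZMod m) : ∑ j ∈ range m, x (r + j) = ∑ z, x z := by
  rw [← sum_zmod_eq_sum_range fun z => x (r + z)]
  exact Equiv.sum_comp (Equiv.addLeft r) x

section CycleLemma

variable {m : ℕ} [NeZero m] {x : ZMod m → ℤ}

-- The rotation starts where `m * (x 0 + ⋯ + x (k - 1)) + k`, which is periodic in `k`, is minimal.
lemma exists_rotation_sum_range_nonneg (hx : ∑ z, x z = -1) :
    ∃ r : ZMod m, ∀ k < m, 0 ≤ ∑ j ∈ range k, x (r + j) := by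
  let S : ℕ → ℤ := fun k => ∑ j ∈ range k, x j
  have hS (a k : ℕ) : S (a + k) = S a + ∑ j ∈ range k, x (a + j) := by
    simp only [S, sum_range_add, Nat.cast_add]
  have periodic : Function.Periodic (fun k => m * S k + k) m := fun k => by
    dsimp only
    rw [hS, sum_range_shift_eq, hx]
    push_cast
    ring
  obtain ⟨r, -, hr⟩ := exists_min_image (range m) (fun k => m * S k + k)
    ⟨0, mem_range.2 (NeZero.pos m)⟩
  refine ⟨r, fun k hk => ?_⟩
  have hmin : m * S r + r ≤ m * S (r + k) + (r + k : ℕ) := by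
    simpa only [periodic.map_mod_nat] using
      hr _ (mem_range.2 (Nat.mod_lt (r + k) (NeZero.pos m)))
  rw [hS] at hmin
  push_cast at hmin
  by_contra! hneg
  have : (m : ℤ) * (∑ j ∈ range k, x (r + j) + 1) ≤ 0 :=
    mul_nonpos_of_nonneg_of_nonpos (by positivity) (by lia)
  lia

lemma rotation_sum_range_nonneg_unique (hx : ∑ z, x z = -1) {r r' : ZMod m}
    (hr : ∀ k < m, 0 ≤ ∑ j ∈ range k, x (r + j)) (hr' : ∀ k < m, 0 ≤ ∑ j ∈ range k, x (r' + j)) :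
    r = r' := by
  by_contra hne
  set d := (r' - r).val with hd
  have hd_pos : 0 < d := Nat.pos_of_ne_zero fun h =>
    hne (sub_eq_zero.1 ((ZMod.val_eq_zero _).1 h)).symm
  have hd_lt : d < m := ZMod.val_lt _
  have split : ∑ j ∈ range m, x (r + j) =
      ∑ j ∈ range d, x (r + j) + ∑ j ∈ range (m - d), x (r' + j) := by
    have hr'_eq : r' = r + d := by simp [hd]
    have := sum_range_add (fun j : ℕ => x (r + j)) d (m - d)
    simpa only [Nat.add_sub_cancel' hd_lt.le, hr'_eq, Nat.cast_add, add_assoc] using this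
  rw [sum_range_shift_eq, hx] at split
  linarith [hr d hd_lt, hr' (m - d) (by lia)]

end CycleLemma

/-- A function is nested if it sends each `j` to some `f j ≤ j` and maps the interval `[f j, j]`
into itself. These are the functions sending each point to the minimum of its block in some
non-crossing partition. -/
structure IsNested {n : ℕ} (f : Fin n → Fin n) : Prop where
  apply_le (j : Fin n) : f j ≤ j
  apply_le_apply {j x : Fin n} (hx : f j ≤ x) (hxj : x ≤ j) : f j ≤ f x

/-- The Łukasiewicz path with `i`-th step `s i - 1`. -/
def lukPath (s : ℕ → ℕ) (k : ℕ) : ℤ := ∑ i ∈ range k, ((s i : ℤ) - 1)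

/-- `s 0, …, s n` is a Łukasiewicz word: its path first reaches `-1` after `n + 1` steps. -/
structure IsLukasiewicz (n : ℕ) (s : ℕ → ℕ) : Prop where
  path_nonneg (k : ℕ) (hk : k ≤ n) : 0 ≤ lukPath s k
  path_succ : lukPath s (n + 1) = -1

/-- The sizes of the fibres of `f`, as a sequence that vanishes from `n` on. -/
def fiberCard {n : ℕ} (f : Fin n → Fin n) (i : ℕ) : ℕ := #{j | (f j : ℕ) = i}

/-- The last `i ≤ j` at which the path is no higher than after its `j`-th step, or `0` if there is
none. In the non-crossing partition with Łukasiewicz word `s`, it is the minimum of the block of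
`j`. -/
def opener (s : ℕ → ℕ) (j : ℕ) : ℕ :=
  Nat.findGreatest (fun i => lukPath s i ≤ lukPath s (j + 1)) j

lemma lukPath_succ (s : ℕ → ℕ) (k : ℕ) : lukPath s (k + 1) = lukPath s k + s k - 1 := by
  rw [lukPath, sum_range_succ, lukPath]
  ring

lemma lukPath_sub_lukPath (s : ℕ → ℕ) {a b : ℕ} (hab : a ≤ b) :
    lukPath s b - lukPath s a = (∑ i ∈ Ico a b, s i : ℕ) - (b - a : ℕ) := by
  rw [lukPath, lukPath, ← sum_Ico_eq_sub _ hab, sum_sub_distrib]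
  simp

section Lukasiewicz

variable {n : ℕ} {s : ℕ → ℕ}

lemma IsLukasiewicz.congr {t : ℕ → ℕ} (hs : IsLukasiewicz n s) (h : ∀ i ≤ n, s i = t i) :
    IsLukasiewicz n t := by
  have path {k : ℕ} (hk : k ≤ n + 1) : lukPath s k = lukPath t k :=
    sum_congr rfl fun i hi => by rw [h i (Nat.le_of_lt_succ ((mem_range.1 hi).trans_le hk))]
  exact ⟨fun k hk => path (hk.trans n.le_succ) ▸ hs.path_nonneg k hk,
    path le_rfl ▸ hs.path_succ⟩

lemma IsLukasiewicz.last_eq_zero (hs : IsLukasiewicz n s) : s n = 0 := by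
  have := lukPath_succ s n
  have := hs.path_nonneg n le_rfl
  have := hs.path_succ
  lia

lemma IsLukasiewicz.path_eq_zero (hs : IsLukasiewicz n s) : lukPath s n = 0 := by
  have := lukPath_succ s n
  have := hs.path_nonneg n le_rfl
  have := hs.path_succ
  lia

lemma IsLukasiewicz.sum_range_eq (hs : IsLukasiewicz n s) : ∑ i ∈ range n, s i = n := by
  have := hs.path_eq_zero
  rw [lukPath, sum_sub_distrib] at this
  simp only [sum_const, card_range, nsmul_eq_mul, mul_one] at this
  exact_mod_cast sub_eq_zero.1 this

end Lukasiewicz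

lemma card_filter_fin_eq_card_filter_range (n : ℕ) (p : ℕ → Prop) [DecidablePred p] :
    #{j : Fin n | p j} = #{k ∈ range n | p k} := by
  rw [card_filter, card_filter, Fin.sum_univ_eq_sum_range fun k => if p k then 1 else 0]

section FiberCard

variable {n : ℕ} (f : Fin n → Fin n)

lemma fiberCard_eq_zero {i : ℕ} (hi : n ≤ i) : fiberCard f i = 0 :=
  card_eq_zero.2 <| filter_eq_empty_iff.2 fun j _ => ((f j).isLt.trans_le hi).ne

lemma sum_Ico_fiberCard (a b : ℕ) :
    ∑ i ∈ Ico a b, fiberCard f i = #{j | a ≤ (f j : ℕ) ∧ (f j : ℕ) < b} := by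
  rw [card_eq_sum_card_fiberwise (f := fun j => (f j : ℕ)) (t := Ico a b) (by simp [Set.MapsTo])]
  refine sum_congr rfl fun i hi => congrArg card ?_
  ext j
  simp only [mem_Ico, mem_filter, mem_univ, true_and] at hi ⊢
  lia

lemma card_filter_val_mem_Ico {a b : ℕ} (hb : b ≤ n) :
    #{j : Fin n | a ≤ (j : ℕ) ∧ (j : ℕ) < b} = b - a := by
  rw [card_filter_fin_eq_card_filter_range n fun k => a ≤ k ∧ k < b, ← Nat.card_Ico]
  congr 1
  ext k
  simp only [mem_filter, mem_range, mem_Ico]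
  lia

variable {f}

lemma IsNested.isLukasiewicz_fiberCard (hf : IsNested f) : IsLukasiewicz n (fiberCard f) where
  path_nonneg k hk := by
    have path := lukPath_sub_lukPath (fiberCard f) (Nat.zero_le k)
    have : k - 0 ≤ ∑ i ∈ Ico 0 k, fiberCard f i := by
      rw [sum_Ico_fiberCard, ← card_filter_val_mem_Ico hk]
      refine card_le_card (monotone_filter_right _ fun j _ hj => ?_)
      exact ⟨Nat.zero_le _, (Fin.le_def.1 (hf.apply_le j)).trans_lt hj.2⟩
    simp only [lukPath, range_zero, sum_empty] at path ⊢
    lia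
  path_succ := by
    have path := lukPath_sub_lukPath (fiberCard f) (Nat.zero_le (n + 1))
    rw [sum_Ico_fiberCard, filter_true_of_mem fun j _ => ⟨Nat.zero_le _, by lia⟩] at path
    simpa [lukPath] using path

lemma IsNested.opener_fiberCard (hf : IsNested f) (j : Fin n) : opener (fiberCard f) j = f j := by
  refine (Nat.findGreatest_eq_iff).2 ⟨hf.apply_le j, fun _ => ?_, fun i hi hij hle => ?_⟩
  · have path := lukPath_sub_lukPath (fiberCard f)
      (show (f j : ℕ) ≤ j + 1 from (Fin.le_def.1 (hf.apply_le j)).trans (Nat.le_succ _))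
    have : (j + 1 - f j : ℕ) ≤ ∑ i ∈ Ico (f j : ℕ) (j + 1), fiberCard f i := by
      rw [sum_Ico_fiberCard, ← card_filter_val_mem_Ico j.isLt]
      refine card_le_card (monotone_filter_right _ fun x _ hx => ?_)
      exact ⟨hf.apply_le_apply hx.1 (Nat.lt_succ_iff.1 hx.2),
        (Fin.le_def.1 (hf.apply_le x)).trans_lt hx.2⟩
    lia
  · have path := lukPath_sub_lukPath (fiberCard f) (show i ≤ j + 1 by lia)
    have : ∑ i ∈ Ico i (j + 1), fiberCard f i ≤ (j - i : ℕ) := by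
      rw [sum_Ico_fiberCard, ← card_filter_val_mem_Ico j.isLt.le]
      refine card_le_card (monotone_filter_right _ fun x _ hx => ?_)
      have hfx : f x ≤ x := hf.apply_le x
      refine ⟨hx.1.trans hfx, lt_of_not_ge fun hjx => ?_⟩
      have : f x ≤ f j := hf.apply_le_apply (Nat.lt_succ_iff.1 hx.2) hjx
      lia
    lia

end FiberCard

section Opener

variable {n : ℕ} {s : ℕ → ℕ}

lemma opener_le (s : ℕ → ℕ) (j : ℕ) : opener s j ≤ j := Nat.findGreatest_le j

lemma lukPath_opener_le {j : ℕ} (hj : 0 ≤ lukPath s (j + 1)) :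
    lukPath s (opener s j) ≤ lukPath s (j + 1) :=
  Nat.findGreatest_spec (P := fun i => lukPath s i ≤ lukPath s (j + 1)) (Nat.zero_le j)
    (by simpa [lukPath] using hj)

lemma lukPath_lt_of_opener_lt {i j : ℕ} (hi : opener s j < i) (hij : i ≤ j) :
    lukPath s (j + 1) < lukPath s i :=
  not_le.1 (Nat.findGreatest_is_greatest hi hij)

lemma opener_le_opener {j x : ℕ} (hj : 0 ≤ lukPath s (j + 1)) (hx : opener s j ≤ x) (hxj : x ≤ j) :
    opener s j ≤ opener s x := by
  rcases hxj.eq_or_lt with rfl | hlt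
  · rfl
  · exact Nat.le_findGreatest hx <| (lukPath_opener_le hj).trans
      (lukPath_lt_of_opener_lt (Nat.lt_succ_of_le hx) hlt).le

-- Along the fibre of `i` the path takes distinct values between `lukPath s i` and
-- `lukPath s (i + 1) = lukPath s i + s i - 1`.
lemma card_filter_opener_eq_le (hs : ∀ k ≤ n, 0 ≤ lukPath s k) (i : ℕ) :
    #{j ∈ range n | opener s j = i} ≤ s i := by
  have maps_to : ∀ j ∈ {j ∈ range n | opener s j = i},
      lukPath s (j + 1) ∈ Icc (lukPath s i) (lukPath s (i + 1)) := by
    simp only [mem_filter, mem_range, mem_Icc, and_imp]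
    rintro j hj rfl
    refine ⟨lukPath_opener_le (hs _ hj), ?_⟩
    rcases (opener_le s j).eq_or_lt with heq | hlt
    · rw [heq]
    · exact (lukPath_lt_of_opener_lt (Nat.lt_succ_self _) hlt).le
  have anti : StrictAntiOn (fun j => lukPath s (j + 1))
      ({j ∈ range n | opener s j = i} : Finset ℕ) := by
    intro j _ j' hj' hlt
    have hij : opener s j = opener s j' := by simp_all
    exact lukPath_lt_of_opener_lt (hij ▸ Nat.lt_succ_of_le (opener_le s j)) hlt
  have := card_le_card_of_injOn _ maps_to anti.injOn
  rw [Int.card_Icc, lukPath_succ] at this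
  lia

lemma IsLukasiewicz.card_filter_opener_eq (hs : IsLukasiewicz n s) {i : ℕ} (hi : i < n) :
    #{j ∈ range n | opener s j = i} = s i := by
  have total : ∑ i ∈ range n, #{j ∈ range n | opener s j = i} = ∑ i ∈ range n, s i := by
    rw [← card_eq_sum_card_fiberwise, hs.sum_range_eq, card_range]
    exact fun j hj => mem_range.2 ((opener_le s j).trans_lt (mem_range.1 hj))
  exact (sum_eq_sum_iff_of_le fun i _ => card_filter_opener_eq_le hs.path_nonneg i).1 total i
    (mem_range.2 hi)

lemma IsLukasiewicz.exists_isNested (hs : IsLukasiewicz n s) :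
    ∃ f : Fin n → Fin n, IsNested f ∧ ∀ i ≤ n, fiberCard f i = s i := by
  let f : Fin n → Fin n := fun j => ⟨opener s j, (opener_le s j).trans_lt j.isLt⟩
  refine ⟨f, ⟨fun j => opener_le s j, fun {j x} => opener_le_opener (hs.path_nonneg _ j.isLt)⟩,
    fun i hi => ?_⟩
  rcases hi.eq_or_lt with rfl | hi
  · rw [fiberCard_eq_zero f le_rfl, hs.last_eq_zero]
  · exact (card_filter_fin_eq_card_filter_range n fun k => opener s k = i).trans
      (hs.card_filter_opener_eq hi)

lemma IsNested.eq_of_fiberCard_eq {f g : Fin n → Fin n} (hf : IsNested f) (hg : IsNested g)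
    (h : fiberCard f = fiberCard g) : f = g :=
  funext fun j => Fin.ext <| by rw [← hf.opener_fiberCard, h, hg.opener_fiberCard]

end Opener

namespace NCPart

section BlockMin

variable {n : ℕ} (P : NCPart n)

/-- The minimum of the block containing `j`. -/
def blockMin (j : Fin n) : Fin n :=
  (P.1.part j).min' (P.1.part_nonempty.2 (mem_univ j))

lemma mem_part_iff_part_eq {j x : Fin n} : x ∈ P.1.part j ↔ P.1.part x = P.1.part j :=
  (P.1.part_eq_iff_mem (P.1.part_mem.2 (mem_univ j))).symm

lemma blockMin_le (j : Fin n) : P.blockMin j ≤ j :=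
  min'_le _ _ (P.1.mem_part_self.2 (mem_univ j))

lemma part_blockMin (j : Fin n) : P.1.part (P.blockMin j) = P.1.part j :=
  P.mem_part_iff_part_eq.1 (min'_mem _ _)

lemma blockMin_eq_blockMin_iff {j x : Fin n} :
    P.blockMin j = P.blockMin x ↔ P.1.part j = P.1.part x :=
  ⟨fun h => by rw [← P.part_blockMin j, h, P.part_blockMin], fun h => by simp only [blockMin, h]⟩

lemma isNested_blockMin : IsNested P.blockMin where
  apply_le := P.blockMin_le
  apply_le_apply {j x} hx hxj := by
    by_contra! hlt
    have hj : P.1.part x ≠ P.1.part j := fun h => hlt.ne (P.blockMin_eq_blockMin_iff.2 h)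
    have hx' : P.blockMin j ≠ x := fun h => hj (by rw [← h, P.part_blockMin])
    have hxj' : x ≠ j := fun h => hj (by rw [h])
    refine hj (P.2 (P.blockMin x) (P.blockMin j) x j hlt (hx.lt_of_ne hx') (hxj.lt_of_ne hxj')
      _ (P.1.part_mem.2 (mem_univ x)) _ (P.1.part_mem.2 (mem_univ j)) ?_ ?_ ?_ ?_) <;>
    simp [mem_part_iff_part_eq, part_blockMin]

lemma blockMin_injective : Function.Injective (blockMin : NCPart n → Fin n → Fin n) := by
  intro P Q h
  have part_eq (j : Fin n) : P.1.part j = Q.1.part j := by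
    ext x
    rw [mem_part_iff_part_eq, mem_part_iff_part_eq, ← blockMin_eq_blockMin_iff,
      ← blockMin_eq_blockMin_iff, h]
  have parts_eq (P : NCPart n) : P.1.parts = univ.image P.1.part := by
    refine coe_injective (.symm ?_)
    simpa using P.1.part_surjOn.image_eq_of_mapsTo fun j _ => P.1.part_mem.2 (mem_univ j)
  exact Subtype.ext <| Finpartition.ext <| by simp only [parts_eq, funext part_eq]

end BlockMin

end NCPart

lemma IsNested.exists_blockMin_eq {n : ℕ} {f : Fin n → Fin n} (hf : IsNested f) :
    ∃ P : NCPart n, P.blockMin = f := by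
  classical
  let P := Finpartition.ofSetoid (Setoid.ker f)
  have mem_part {j x : Fin n} : x ∈ P.part j ↔ f j = f x := Finpartition.mem_part_ofSetoid_iff_rel
  have apply_apply (j : Fin n) : f (f j) = f j :=
    le_antisymm (hf.apply_le _) (hf.apply_le_apply le_rfl (hf.apply_le j))
  have nonCrossing : IsNonCrossing P := by
    intro a b c d hab hbc hcd B hB B' hB' ha hc hb hd
    rw [← P.part_eq_of_mem hB ha, mem_part] at hc
    rw [← P.part_eq_of_mem hB' hb, mem_part] at hd
    have hcb : f c ≤ f b := hf.apply_le_apply (hc ▸ (hf.apply_le a).trans hab.le) hbc.le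
    have hdc : f d ≤ f c := hf.apply_le_apply (hd ▸ (hf.apply_le b).trans hbc.le) hcd.le
    have hbB : b ∈ P.part a := mem_part.2 (hc.trans (le_antisymm hcb (hd ▸ hdc)))
    rw [P.part_eq_of_mem hB ha] at hbB
    exact P.eq_of_mem_parts hB hB' hbB hb
  refine ⟨⟨P, nonCrossing⟩, funext fun j => le_antisymm ?_ ?_⟩
  · exact min'_le _ _ (mem_part.2 (apply_apply j).symm)
  · refine le_min' _ _ _ fun x hx => ?_
    rw [mem_part.1 hx]
    exact hf.apply_le x

namespace NCPart

section Word

variable {n : ℕ} (P : NCPart n)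

/-- The Łukasiewicz word of a non-crossing partition: its `i`-th letter is the size of the block
with minimum `i`, or `0` if `i` is not the minimum of a block. -/
def word : ℕ → ℕ := fiberCard P.blockMin

lemma isLukasiewicz_word : IsLukasiewicz n P.word := P.isNested_blockMin.isLukasiewicz_fiberCard

lemma word_injective : Function.Injective (word : NCPart n → ℕ → ℕ) := fun P Q h =>
  blockMin_injective (P.isNested_blockMin.eq_of_fiberCard_eq Q.isNested_blockMin h)

lemma word_blockMin (j : Fin n) : P.word (P.blockMin j) = #(P.1.part j) := by
  rw [word, fiberCard]
  congr 1
  ext x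
  simp [Fin.val_inj, mem_part_iff_part_eq, blockMin_eq_blockMin_iff]

lemma word_le_maxBlockSize (i : ℕ) : P.word i ≤ maxBlockSize P := by
  rcases Nat.eq_zero_or_pos (P.word i) with h0 | hpos
  · exact h0 ▸ Nat.zero_le _
  · obtain ⟨j, hj⟩ : ∃ j, (P.blockMin j : ℕ) = i := by
      simpa [word, fiberCard, filter_nonempty_iff] using hpos
    rw [← hj, word_blockMin]
    exact le_sup (f := card) (P.1.part_mem.2 (mem_univ j))

lemma maxBlockSize_le_of_word_le {k : ℕ} (h : ∀ i < n, P.word i ≤ k) : maxBlockSize P ≤ k := by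
  refine Finset.sup_le fun B hB => ?_
  obtain ⟨j, hj⟩ := P.1.nonempty_of_mem_parts hB
  rw [← P.1.part_eq_of_mem hB hj, ← P.word_blockMin]
  exact h _ (P.blockMin j).isLt

end Word

end NCPart

lemma IsLukasiewicz.exists_word_eq {n : ℕ} {s : ℕ → ℕ} (hs : IsLukasiewicz n s) :
    ∃ P : NCPart n, ∀ i ≤ n, P.word i = s i := by
  obtain ⟨f, hf, hfs⟩ := hs.exists_isNested
  obtain ⟨P, rfl⟩ := hf.exists_blockMin_eq
  exact ⟨P, hfs⟩

namespace NCPart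

section RotatedWord

variable {n : ℕ}

/-- The word of `P`, read cyclically from position `r`. -/
def rotatedWord (p : NCPart n × ZMod (n + 1)) (z : ZMod (n + 1)) : ℕ :=
  p.1.word (z - p.2).val

lemma rotatedWord_eq_iff {r : ZMod (n + 1)} {P : NCPart n} {w : ZMod (n + 1) → ℕ} :
    rotatedWord (P, r) = w ↔ ∀ i ≤ n, P.word i = w (r + i) := by
  constructor
  · rintro rfl i hi
    rw [rotatedWord, add_sub_cancel_left, ZMod.val_cast_of_lt (Nat.lt_succ_of_le hi)]
  · intro h
    ext z
    rw [rotatedWord, h _ (Nat.le_of_lt_succ (ZMod.val_lt _)), ZMod.natCast_zmod_val,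
      add_sub_cancel]

lemma sum_rotatedWord (p : NCPart n × ZMod (n + 1)) : ∑ z, rotatedWord p z = n := by
  obtain ⟨P, r⟩ := p
  have hP : ∀ i ≤ n, P.word i = rotatedWord (P, r) (r + i) := rotatedWord_eq_iff.1 rfl
  rw [← sum_range_shift_eq _ r,
    ← sum_congr rfl fun i hi => hP i (Nat.le_of_lt_succ (mem_range.1 hi)), sum_range_succ,
    P.isLukasiewicz_word.last_eq_zero, P.isLukasiewicz_word.sum_range_eq, add_zero]

lemma existsUnique_rotatedWord_eq {w : ZMod (n + 1) → ℕ} (hw : ∑ z, w z = n) :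
    ∃! p, rotatedWord p = w := by
  have sum_step : ∑ z, ((w z : ℤ) - 1) = -1 := by
    rw [sum_sub_distrib, ← Nat.cast_sum, hw]
    simp [ZMod.card]
  have luk {r} : IsLukasiewicz n (fun i => w (r + i)) ↔
      ∀ k < n + 1, 0 ≤ ∑ j ∈ range k, ((w (r + j) : ℤ) - 1) :=
    ⟨fun h k hk => h.path_nonneg k (Nat.le_of_lt_succ hk), fun h =>
      ⟨fun k hk => h k (Nat.lt_succ_of_le hk),
        (sum_range_shift_eq (fun z => (w z : ℤ) - 1) r).trans sum_step⟩⟩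
  obtain ⟨r, hr⟩ := exists_rotation_sum_range_nonneg sum_step
  obtain ⟨P, hP⟩ := (luk.2 hr).exists_word_eq
  refine ⟨(P, r), rotatedWord_eq_iff.2 hP, ?_⟩
  rintro ⟨P', r'⟩ h
  have hP' := rotatedWord_eq_iff.1 h
  obtain rfl : r' = r := rotation_sum_range_nonneg_unique sum_step
    (luk.1 (P'.isLukasiewicz_word.congr hP')) hr
  refine Prod.ext (word_injective (funext fun i => ?_)) rfl
  rcases le_total i n with hi | hi
  · rw [hP' i hi, hP i hi]
  · rw [word, word, fiberCard_eq_zero _ hi, fiberCard_eq_zero _ hi]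

/-- Non-crossing partitions of `[n]` together with a rotation are the weak compositions of `n` into
`n + 1` parts. -/
noncomputable def rotatedWordEquiv (n : ℕ) :
    NCPart n × ZMod (n + 1) ≃ {w : ZMod (n + 1) → ℕ // ∑ z, w z = n} :=
  .ofBijective (fun p => ⟨rotatedWord p, sum_rotatedWord p⟩) <|
    (Function.bijective_iff_existsUnique _).2 fun ⟨_, hw⟩ => by
      simpa only [Subtype.ext_iff] using existsUnique_rotatedWord_eq hw

lemma sup_rotatedWord (p : NCPart n × ZMod (n + 1)) :
    univ.sup (rotatedWord p) = maxBlockSize p.1 := by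
  obtain ⟨P, r⟩ := p
  refine le_antisymm (Finset.sup_le fun z _ => P.word_le_maxBlockSize _)
    (P.maxBlockSize_le_of_word_le fun i hi => ?_)
  rw [rotatedWord_eq_iff.1 rfl i hi.le]
  exact le_sup (mem_univ (r + (i : ZMod (n + 1))))

lemma succ_mul_card_maxBlockSize (n : ℕ) (q : ℕ → Prop) [DecidablePred q] :
    (n + 1) * Nat.card {P : NCPart n // q (maxBlockSize P)} =
      #{w ∈ piAntidiag (univ : Finset (ZMod (n + 1))) n | q (univ.sup w)} := by
  calc (n + 1) * Nat.card {P : NCPart n // q (maxBlockSize P)}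
      = Nat.card ({P : NCPart n // q (maxBlockSize P)} × ZMod (n + 1)) := by
        rw [Nat.card_prod, Nat.card_zmod, mul_comm]
    _ = Nat.card {p : NCPart n × ZMod (n + 1) // q (maxBlockSize p.1)} :=
        Nat.card_congr Equiv.prodSubtypeFstEquivSubtypeProd.symm
    _ = Nat.card {w : {w : ZMod (n + 1) → ℕ // ∑ z, w z = n} // q (univ.sup w.1)} :=
        Nat.card_congr <| (rotatedWordEquiv n).subtypeEquiv fun p => by
          rw [← sup_rotatedWord]; rfl
    _ = Nat.card {w // w ∈ {w ∈ piAntidiag (univ : Finset (ZMod (n + 1))) n | q (univ.sup w)}} :=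
        Nat.card_congr <| (Equiv.subtypeSubtypeEquivSubtypeInter _ fun w => q (univ.sup w)).trans <|
          Equiv.subtypeEquivRight fun w => by simp
    _ = _ := Nat.card_eq_finsetCard _

lemma succ_mul_card (n : ℕ) :
    (n + 1) * Fintype.card (NCPart n) = #(piAntidiag (univ : Finset (ZMod (n + 1))) n) := by
  simpa using succ_mul_card_maxBlockSize n fun _ => True

end RotatedWord

end NCPart

section WeakCompositions

lemma two_mul_multichoose_le {N m : ℕ} (h : m + 1 < N) :
    2 * N.multichoose m ≤ N.multichoose (m + 1) := by
  obtain ⟨K, rfl⟩ := Nat.exists_eq_add_of_lt (Nat.zero_lt_of_lt h)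
  have hrec : (K + m + 1) * (K + m).choose m = (K + m + 1).choose (m + 1) * (m + 1) :=
    Nat.add_one_mul_choose_eq (K + m) m
  have e₁ : (0 + K + 1).multichoose m = (K + m).choose m := by
    rw [Nat.multichoose_eq]; congr 1; lia
  have e₂ : (0 + K + 1).multichoose (m + 1) = (K + m + 1).choose (m + 1) := by
    rw [Nat.multichoose_eq]; congr 1; lia
  rw [e₁, e₂]
  refine Nat.le_of_mul_le_mul_right (c := m + 1) ?_ m.succ_pos
  calc 2 * (K + m).choose m * (m + 1) = 2 * (m + 1) * (K + m).choose m := by ring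
    _ ≤ (K + m + 1) * (K + m).choose m := Nat.mul_le_mul_right _ (by lia)
    _ = (K + m + 1).choose (m + 1) * (m + 1) := hrec

lemma two_pow_mul_multichoose_le {N m k : ℕ} (h : m + k < N) :
    2 ^ k * N.multichoose m ≤ N.multichoose (m + k) := by
  induction k with
  | zero => simp
  | succ k ih =>
    calc 2 ^ (k + 1) * N.multichoose m = 2 * (2 ^ k * N.multichoose m) := by ring
      _ ≤ 2 * N.multichoose (m + k) := Nat.mul_le_mul_left _ (ih (by lia))
      _ ≤ N.multichoose (m + (k + 1)) := two_mul_multichoose_le h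

variable {ι : Type*} [Fintype ι] [DecidableEq ι]

lemma card_piAntidiag_univ (n : ℕ) :
    #(piAntidiag (univ : Finset ι) n) = (Fintype.card ι).multichoose n := by
  rw [← card_univ, ← card_finsuppAntidiag_nat_eq_multichoose, finsuppAntidiag, card_map,
    card_attach]

lemma card_filter_le_apply_piAntidiag (m k : ℕ) (i : ι) :
    #{w ∈ piAntidiag (univ : Finset ι) (m + k) | k ≤ w i} = #(piAntidiag (univ : Finset ι) m) := by
  have sub_add {w : ι → ℕ} (hw : k ≤ w i) : w - Pi.single i k + Pi.single i k = w :=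
    tsub_add_cancel_of_le fun z => by
      rcases eq_or_ne z i with rfl | hz <;> simp [*]
  have sum_add (w : ι → ℕ) : ∑ z, (w + Pi.single i k : ι → ℕ) z = ∑ z, w z + k := by
    simp [sum_add_distrib]
  refine card_nbij' (· - Pi.single i k) (· + Pi.single i k) (fun w hw => ?_) (fun w hw => ?_)
    (fun w hw => sub_add (mem_filter.1 hw).2) fun w _ => add_tsub_cancel_right w _
  · obtain ⟨hw, hk⟩ := mem_filter.1 hw
    refine mem_piAntidiag.2 ⟨?_, fun z _ => mem_univ z⟩
    have := sum_add (w - Pi.single i k)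
    rw [sub_add hk, (mem_piAntidiag.1 hw).1] at this
    exact (Nat.add_right_cancel this).symm
  · refine mem_filter.2 ⟨mem_piAntidiag.2 ⟨?_, fun z _ => mem_univ z⟩, by simp⟩
    rw [sum_add, (mem_piAntidiag.1 hw).1]

lemma two_pow_mul_card_le_sup_piAntidiag {n : ℕ} (hn : n < Fintype.card ι) (k : ℕ) :
    2 ^ k * #{w ∈ piAntidiag (univ : Finset ι) n | k ≤ univ.sup w} ≤
      Fintype.card ι * #(piAntidiag (univ : Finset ι) n) := by
  have : Nonempty ι := Fintype.card_pos_iff.1 (Nat.zero_lt_of_lt hn)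
  have sub : {w ∈ piAntidiag (univ : Finset ι) n | k ≤ univ.sup w} ⊆
      univ.biUnion fun i => {w ∈ piAntidiag (univ : Finset ι) n | k ≤ w i} := by
    intro w hw
    obtain ⟨hw, hk⟩ := mem_filter.1 hw
    obtain ⟨i, -, hi⟩ := exists_mem_eq_sup univ univ_nonempty w
    exact mem_biUnion.2 ⟨i, mem_univ i, mem_filter.2 ⟨hw, hi ▸ hk⟩⟩
  have bound (i : ι) : 2 ^ k * #{w ∈ piAntidiag (univ : Finset ι) n | k ≤ w i} ≤
      #(piAntidiag (univ : Finset ι) n) := by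
    rcases le_or_gt k n with hkn | hnk
    · obtain ⟨m, rfl⟩ := Nat.exists_eq_add_of_le' hkn
      rw [card_filter_le_apply_piAntidiag, card_piAntidiag_univ, card_piAntidiag_univ]
      exact two_pow_mul_multichoose_le hn
    · rw [filter_false_of_mem, card_empty, mul_zero]
      · exact Nat.zero_le _
      · intro w hw hk
        have := single_le_sum (f := w) (fun _ _ => Nat.zero_le _) (mem_univ i)
        have := (mem_piAntidiag.1 hw).1
        lia
  calc 2 ^ k * #{w ∈ piAntidiag (univ : Finset ι) n | k ≤ univ.sup w}
      ≤ 2 ^ k * ∑ i, #{w ∈ piAntidiag (univ : Finset ι) n | k ≤ w i} :=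
        Nat.mul_le_mul_left _ ((card_le_card sub).trans card_biUnion_le)
    _ = ∑ i, 2 ^ k * #{w ∈ piAntidiag (univ : Finset ι) n | k ≤ w i} := mul_sum _ _ _
    _ ≤ ∑ _i : ι, #(piAntidiag (univ : Finset ι) n) := sum_le_sum fun i _ => bound i
    _ = Fintype.card ι * #(piAntidiag (univ : Finset ι) n) := by simp

-- Expand the power: each composition `w` of `n` contributes a term `∏ i, t ^ w i = t ^ n`.
lemma card_sup_lt_piAntidiag_mul_pow_le {R : Type*} [CommSemiring R] [PartialOrder R]
    [IsOrderedRing R] {t : R} (ht : 0 ≤ t) (n k : ℕ) :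
    #{w ∈ piAntidiag (univ : Finset ι) n | univ.sup w < k} * t ^ n ≤
      (∑ j ∈ range k, t ^ j) ^ Fintype.card ι := by
  calc #{w ∈ piAntidiag (univ : Finset ι) n | univ.sup w < k} * t ^ n
      = ∑ w ∈ piAntidiag (univ : Finset ι) n with univ.sup w < k, ∏ i, t ^ w i := by
        rw [← nsmul_eq_mul, ← sum_const]
        refine sum_congr rfl fun w hw => ?_
        rw [prod_pow_eq_pow_sum, (mem_piAntidiag.1 (mem_filter.1 hw).1).1]
    _ ≤ ∑ w ∈ Fintype.piFinset fun _ : ι => range k, ∏ i, t ^ w i := by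
        refine sum_le_sum_of_subset_of_nonneg (fun w hw => ?_) fun w _ _ =>
          prod_nonneg fun i _ => pow_nonneg ht _
        exact Fintype.mem_piFinset.2 fun i =>
          mem_range.2 ((le_sup (mem_univ i)).trans_lt (mem_filter.1 hw).2)
    _ = (∑ j ∈ range k, t ^ j) ^ Fintype.card ι := by
        rw [← prod_univ_sum, prod_const, card_univ]

lemma card_sup_lt_piAntidiag_le (n k : ℕ) :
    (#{w ∈ piAntidiag (univ : Finset ι) n | univ.sup w < k} : ℝ) ≤
      2 ^ n * (2 * (1 - (1 / 2) ^ k)) ^ Fintype.card ι := by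
  have weight := card_sup_lt_piAntidiag_mul_pow_le (ι := ι) (show (0 : ℝ) ≤ 1 / 2 by norm_num) n k
  have geom : ∑ j ∈ range k, (1 / 2 : ℝ) ^ j = 2 * (1 - (1 / 2) ^ k) := by
    rw [geom_sum_eq (by norm_num)]
    ring
  rwa [geom, one_div_pow, mul_one_div, div_le_iff₀' (by positivity)] at weight

end WeakCompositions

namespace NCPart

lemma card_eq_catalan (n : ℕ) : Fintype.card (NCPart n) = catalan n := by
  refine Nat.eq_of_mul_eq_mul_left n.succ_pos ?_
  rw [succ_mul_card, card_piAntidiag_univ, ZMod.card, Nat.multichoose_eq,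
    succ_mul_catalan_eq_centralBinom, Nat.centralBinom_eq_two_mul_choose]
  congr 1
  lia

lemma card_pos (n : ℕ) : 0 < Fintype.card (NCPart n) :=
  Nat.pos_of_mul_pos_left (a := n + 1) <| by
    rw [card_eq_catalan, succ_mul_catalan_eq_centralBinom]
    exact n.centralBinom_pos

/-- The probability that a uniformly random non-crossing partition of `[n]` has the property `q`. -/
noncomputable def proportion (n : ℕ) (q : NCPart n → Prop) : ℝ :=
  (Nat.card {π : NCPart n // q π} : ℝ) / Fintype.card (NCPart n)

lemma proportion_nonneg (n : ℕ) (q : NCPart n → Prop) : 0 ≤ proportion n q := by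
  unfold proportion
  positivity

lemma proportion_le_add {n : ℕ} {p q r : NCPart n → Prop} (h : ∀ π, p π → q π ∨ r π) :
    proportion n p ≤ proportion n q + proportion n r := by
  classical
  rw [proportion, proportion, proportion, ← add_div]
  gcongr
  simp only [Nat.card_eq_fintype_card]
  exact_mod_cast (Fintype.card_subtype_mono p _ h).trans (Fintype.card_subtype_or q r)

lemma proportion_le_maxBlockSize_le (n k : ℕ) :
    proportion n (fun π => k ≤ maxBlockSize π) ≤ (n + 1) / 2 ^ k := by
  have tail := two_pow_mul_card_le_sup_piAntidiag (ι := ZMod (n + 1)) (n := n) (by simp) k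
  rw [← succ_mul_card_maxBlockSize n fun l => k ≤ l, ← succ_mul_card, ZMod.card,
    mul_left_comm] at tail
  rw [proportion, div_le_div_iff₀ (by exact_mod_cast card_pos n) (by positivity), mul_comm]
  exact_mod_cast Nat.le_of_mul_le_mul_left tail n.succ_pos

lemma proportion_maxBlockSize_lt_le (n k : ℕ) :
    proportion n (fun π => maxBlockSize π < k) ≤
      2 * (2 * n + 1) * (1 - (1 / 2) ^ k) ^ (n + 1) := by
  have count := card_sup_lt_piAntidiag_le (ι := ZMod (n + 1)) n k
  rw [← succ_mul_card_maxBlockSize n fun l => l < k, ZMod.card, mul_pow] at count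
  have four_pow : (4 : ℝ) ^ n ≤ (2 * n + 1) * ((n + 1) * Fintype.card (NCPart n)) := by
    rw [card_eq_catalan]
    have := Nat.four_pow_le_two_mul_add_one_mul_central_binom n
    rw [← Nat.centralBinom_eq_two_mul_choose, ← succ_mul_catalan_eq_centralBinom] at this
    exact_mod_cast this
  have q_nonneg : (0 : ℝ) ≤ (1 - (1 / 2) ^ k) ^ (n + 1) :=
    pow_nonneg (sub_nonneg.2 (pow_le_one₀ (by norm_num) (by norm_num))) _
  rw [proportion, div_le_iff₀ (by exact_mod_cast card_pos n)]
  refine le_of_mul_le_mul_left ?_ (show (0 : ℝ) < n + 1 by positivity)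
  push_cast at count
  calc ((n : ℝ) + 1) * Nat.card {π : NCPart n // maxBlockSize π < k}
      ≤ 2 ^ n * (2 ^ (n + 1) * (1 - (1 / 2) ^ k) ^ (n + 1)) := count
    _ = 2 * 4 ^ n * (1 - (1 / 2) ^ k) ^ (n + 1) := by
        rw [show (4 : ℝ) = 2 * 2 by norm_num, mul_pow]
        ring
    _ ≤ 2 * ((2 * n + 1) * ((n + 1) * Fintype.card (NCPart n))) *
          (1 - (1 / 2) ^ k) ^ (n + 1) := by gcongr
    _ = _ := by ring

lemma proportion_le_maxBlockSize_le_rpow (n : ℕ) (x : ℝ) :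
    proportion n (fun π => x ≤ maxBlockSize π) ≤ (n + 1) / 2 ^ x := by
  simp only [← Nat.ceil_le]
  refine (proportion_le_maxBlockSize_le n ⌈x⌉₊).trans ?_
  gcongr
  rw [← Real.rpow_natCast]
  exact Real.rpow_le_rpow_of_exponent_le one_le_two (Nat.le_ceil x)

lemma proportion_maxBlockSize_lt_le_exp (n : ℕ) (x : ℝ) :
    proportion n (fun π => maxBlockSize π < x) ≤
      2 * (2 * n + 1) * Real.exp (-((n + 1) / 2 ^ (x + 1))) := by
  rcases lt_or_ge x 0 with hx | hx
  · have : IsEmpty {π : NCPart n // maxBlockSize π < x} :=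
      ⟨fun π => (hx.trans_le (Nat.cast_nonneg _)).not_gt π.2⟩
    rw [proportion, Nat.card_of_isEmpty, Nat.cast_zero, zero_div]
    positivity
  simp only [← Nat.lt_ceil]
  refine (proportion_maxBlockSize_lt_le n ⌈x⌉₊).trans ?_
  have two_pow_le : (2 : ℝ) ^ ⌈x⌉₊ ≤ 2 ^ (x + 1) := by
    rw [← Real.rpow_natCast]
    exact Real.rpow_le_rpow_of_exponent_le one_le_two (Nat.ceil_lt_add_one hx).le
  gcongr
  calc (1 - (1 / 2 : ℝ) ^ ⌈x⌉₊) ^ (n + 1) ≤ Real.exp (-(1 / 2) ^ ⌈x⌉₊) ^ (n + 1) :=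
        pow_le_pow_left₀ (sub_nonneg.2 (pow_le_one₀ (by norm_num) (by norm_num)))
          (Real.one_sub_le_exp_neg _) _
    _ = Real.exp (-((n + 1) / 2 ^ ⌈x⌉₊)) := by
        rw [← Real.exp_nat_mul, one_div_pow]
        push_cast
        ring_nf
    _ ≤ Real.exp (-((n + 1) / 2 ^ (x + 1))) := by gcongr

lemma two_rpow_mul_logb {x : ℝ} (hx : 0 < x) (a : ℝ) : (2 : ℝ) ^ (a * Real.logb 2 x) = x ^ a := by
  rw [mul_comm, Real.rpow_mul zero_le_two, Real.rpow_logb two_pos (by norm_num) hx]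

lemma tendsto_proportion_mul_logb_le_maxBlockSize {a : ℝ} (ha : 1 < a) :
    Tendsto (fun n : ℕ => proportion n fun π => a * Real.logb 2 n ≤ maxBlockSize π)
      atTop (nhds 0) := by
  have lim : Tendsto (fun n : ℕ => 2 * (n : ℝ) ^ (-(a - 1))) atTop (nhds 0) := by
    simpa using ((tendsto_rpow_neg_atTop (sub_pos.2 ha)).comp
      tendsto_natCast_atTop_atTop).const_mul 2
  refine squeeze_zero' (.of_forall fun n => proportion_nonneg n _) ?_ lim
  filter_upwards [eventually_ge_atTop 1] with n hn
  have hn1 : (1 : ℝ) ≤ n := by exact_mod_cast hn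
  have hn0 : (0 : ℝ) < n := by positivity
  calc proportion n (fun π => a * Real.logb 2 n ≤ maxBlockSize π) ≤ (n + 1) / (n : ℝ) ^ a := by
        rw [← two_rpow_mul_logb hn0]
        exact proportion_le_maxBlockSize_le_rpow n _
    _ ≤ (2 * n) / (n : ℝ) ^ a := by gcongr; linarith
    _ = 2 * (n : ℝ) ^ (-(a - 1)) := by
        rw [neg_sub, Real.rpow_sub hn0, Real.rpow_one, mul_div_assoc]

lemma tendsto_proportion_maxBlockSize_lt_mul_logb {a : ℝ} (ha : a < 1) :
    Tendsto (fun n : ℕ => proportion n fun π => maxBlockSize π < a * Real.logb 2 n)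
      atTop (nhds 0) := by
  have lim : Tendsto (fun n : ℕ => 6 * ((n : ℝ) * Real.exp (-(1 / 2) * (n : ℝ) ^ (1 - a))))
      atTop (nhds 0) := by
    have := ((tendsto_rpow_mul_exp_neg_mul_atTop_nhds_zero (1 / (1 - a)) (1 / 2) (by norm_num)).comp
      (tendsto_rpow_atTop (sub_pos.2 ha))).comp (tendsto_natCast_atTop_atTop (R := ℝ))
    simpa [Function.comp_def, ← Real.rpow_mul, mul_inv_cancel₀ (sub_pos.2 ha).ne'] using
      this.const_mul 6
  refine squeeze_zero' (.of_forall fun n => proportion_nonneg n _) ?_ lim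
  filter_upwards [eventually_ge_atTop 1] with n hn
  have hn1 : (1 : ℝ) ≤ n := by exact_mod_cast hn
  have hn0 : (0 : ℝ) < n := by positivity
  have exponent : 1 / 2 * (n : ℝ) ^ (1 - a) ≤ (n + 1) / 2 ^ (a * Real.logb 2 n + 1) := by
    rw [Real.rpow_add_one two_ne_zero, two_rpow_mul_logb hn0, Real.rpow_sub hn0, Real.rpow_one]
    calc 1 / 2 * (n / (n : ℝ) ^ a) = n / ((n : ℝ) ^ a * 2) := by ring
      _ ≤ (n + 1) / ((n : ℝ) ^ a * 2) := by gcongr; linarith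
  calc proportion n (fun π => maxBlockSize π < a * Real.logb 2 n)
      ≤ 2 * (2 * n + 1) * Real.exp (-((n + 1) / 2 ^ (a * Real.logb 2 n + 1))) :=
        proportion_maxBlockSize_lt_le_exp n _
    _ ≤ 6 * n * Real.exp (-(1 / 2) * (n : ℝ) ^ (1 - a)) :=
        mul_le_mul (by linarith) (Real.exp_le_exp.2 (by linarith)) (Real.exp_pos _).le
          (by positivity)
    _ = _ := mul_assoc _ _ _

end NCPart

/-- Law of large numbers for the largest block: `L_n / log₂ n → 1` in
probability, i.e. for every `ε > 0` the proportion of non-crossing partitions `π` of `[n]`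
with `|L(π)/log₂ n − 1| > ε` tends to `0` as `n → ∞`. -/
theorem maxBlockSize_LLN (ε : ℝ) (hε : 0 < ε) :
    Tendsto
      (fun n : ℕ =>
        (Nat.card {π : NCPart n //
            ε < |(maxBlockSize π : ℝ) / Real.logb 2 (n : ℝ) - 1|} : ℝ) /
          (Fintype.card (NCPart n) : ℝ))
      atTop (nhds 0) := by
  have upper := NCPart.tendsto_proportion_mul_logb_le_maxBlockSize (lt_add_of_pos_right 1 hε)
  have lower := NCPart.tendsto_proportion_maxBlockSize_lt_mul_logb (sub_lt_self 1 hε)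
  refine squeeze_zero' (.of_forall fun n => NCPart.proportion_nonneg n _) ?_
    (by simpa using upper.add lower)
  filter_upwards [eventually_ge_atTop 2] with n hn
  have log_pos : 0 < Real.logb 2 (n : ℝ) := Real.logb_pos one_lt_two (by exact_mod_cast hn)
  refine NCPart.proportion_le_add fun π hπ => ?_
  rcases lt_abs.1 hπ with above | below
  · exact .inl ((lt_div_iff₀ log_pos).1 (by linarith)).le
  · exact .inr ((div_lt_iff₀ log_pos).1 (by linarith))
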